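/- Let G be a finite simple graph on V = {x_1, ..., x_n} with cover ideal J = J(G) ⊆ S = K[x_1, ..., x_n]. Then the set of associated primes of S/J^2 is Ass(S/J^2) = { p_e : e ∈ E(G) } ∪ { p_W : G_W is an induced odd cycle of G }, where for a subset W ⊆ V, p_W = (x_i : x_i ∈ W). -/

import Mathlib

open MvPolynomial

/-- A finite simple graph on vertex set `Fin n`, presented as a hypergraph all of whose
edges have cardinality exactly two. -/
structure GraphOn (n : ℕ) where
  edges : Finset (Finset (Fin n))
  card_eq : ∀ e ∈ edges, e.card = 2

/-- `w` is a vertex cover of `G`: it meets every edge. -/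
def IsCover {n : ℕ} (G : GraphOn n) (w : Finset (Fin n)) : Prop :=
  ∀ e ∈ G.edges, (w ∩ e).Nonempty

/-- The cover ideal of `G`. -/
noncomputable def coverIdeal {n : ℕ} (K : Type*) [Field K] (G : GraphOn n) :
    Ideal (MvPolynomial (Fin n) K) :=
  Ideal.span {m | ∃ w : Finset (Fin n), IsCover G w ∧ m = ∏ i ∈ w, X i}

/-- The induced subgraph of `G` on `W` is an odd cycle. -/
def IsInducedOddCycle {n : ℕ} (G : GraphOn n) (W : Finset (Fin n)) : Prop :=
  3 ≤ W.card ∧ Odd W.card ∧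
    ∃ f : ZMod W.card → Fin n, Function.Injective f ∧ (∀ i, f i ∈ W) ∧
      (∀ w ∈ W, ∃ i, f i = w) ∧
      (∀ i, ({f i, f (i + 1)} : Finset (Fin n)) ∈ G.edges) ∧
      (∀ e ∈ G.edges, e ⊆ W → ∃ i, e = ({f i, f (i + 1)} : Finset (Fin n)))

/-- The monomial prime generated by the variables indexed by `T`. -/
noncomputable def varPrime {n : ℕ} (K : Type*) [Field K] (T : Finset (Fin n)) :
    Ideal (MvPolynomial (Fin n) K) :=
  Ideal.span {p | ∃ i ∈ T, p = X i}

/-!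
A monomial `x^a` lies in the square of the cover ideal iff there are two covers inside
`{i | a i ≥ 1}` that overlap only where `a i ≥ 2`. This requires `a i + a j ≥ 2` on
every edge, and then amounts to a proper 2-colouring of the graph induced on `{i | a i ≤ 1}`, which
exists iff this set contains no induced odd cycle (a shortest odd closed walk is one). Hence
`J² = ⋂ₑ pₑ² ∩ ⋂_W (xᵢ² : i ∈ W)`. These components are primary with radicals `pₑ` and `p_W`, and
none is redundant: take the exponent `2` off the edge or cycle, and inside it `0` for an edge and
`1` for a cycle, where minimality of induced odd cycles handles the other cycles. The associated
primes are the radicals of the components of such a decomposition.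
-/

theorem associatedPrimes_quotient {R M : Type*} [CommRing R] [AddCommGroup M] [Module R M]
    (N : Submodule R M) : associatedPrimes R (M ⧸ N) = N.associatedPrimes := by
  have colon_mk (x : M) : (⊥ : Submodule R (M ⧸ N)).colon {N.mkQ x} = N.colon {x} := by
    ext r
    rw [Submodule.mem_colon_singleton, Submodule.mem_colon_singleton, ← map_smul,
      Submodule.mem_bot, Submodule.mkQ_apply, Submodule.Quotient.mk_eq_zero]
  ext P
  rw [AssociatedPrimes.mem_iff, IsAssociatedPrime, Submodule.AssociatePrimes.mem_iff,
    Submodule.isAssociatedPrime_def, Submodule.isAssociatedPrime_def, N.mkQ_surjective.exists]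
  simp only [colon_mk]

theorem associatedPrimes_quotient_iInf {R ι : Type*} [CommRing R] [Finite ι] {Q : ι → Ideal R}
    (primary : ∀ i, (Q i).IsPrimary) (distinct : Function.Injective fun i => (Q i).radical)
    (irredundant : ∀ i, ∃ x ∉ Q i, ∀ j ≠ i, x ∈ Q j) :
    associatedPrimes R (R ⧸ ⨅ i, Q i) = Set.range fun i => (Q i).radical := by
  classical
  have := Fintype.ofFinite ι
  have decomposition :
      Submodule.IsMinimalPrimaryDecomposition (⨅ i, Q i) (Finset.univ.image Q) := by
    refine ⟨?_, ?_, ?_, ?_⟩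
    · rw [Finset.inf_image, Function.id_comp, Finset.inf_univ_eq_iInf]
    · simpa using primary
    · simp only [Finset.coe_image, Finset.coe_univ, Set.image_univ]
      rintro _ ⟨i, rfl⟩ _ ⟨j, rfl⟩ hij
      simpa [Function.onFun] using distinct.ne (ne_of_apply_ne Q hij)
    · simp only [Finset.mem_image, Finset.mem_univ, true_and]
      rintro _ ⟨i, rfl⟩ hle
      obtain ⟨x, hxi, hxj⟩ := irredundant i
      refine hxi (hle ?_)
      simp only [Submodule.mem_finsetInf, Finset.mem_erase, Finset.mem_image, Finset.mem_univ,
        true_and]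
      rintro _ ⟨hne, j, rfl⟩
      exact hxj j (ne_of_apply_ne Q hne)
  rw [associatedPrimes_quotient, ← decomposition.image_radical_eq_associated_primes]
  ext P
  simp

section MonomialIdeal

variable {σ R : Type*} [CommSemiring R]

open scoped Pointwise in
theorem span_monomial_image_mul (S T : Set (σ →₀ ℕ)) :
    Ideal.span ((fun a => monomial a (1 : R)) '' S) * Ideal.span ((fun a => monomial a 1) '' T) =
      Ideal.span ((fun a => monomial a 1) '' (S + T)) := by
  rw [Ideal.span_mul_span', ← Set.image2_add, ← Set.image2_mul]
  congr 1
  exact (Set.image_image2_distrib fun a b => by rw [monomial_mul, one_mul]).symm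

open scoped Pointwise in
theorem setOf_succ_le_sum_eq_add (W : Finset σ) (k : ℕ) :
    {a : σ →₀ ℕ | k + 1 ≤ ∑ i ∈ W, a i} =
      {a | k ≤ ∑ i ∈ W, a i} + (fun i => Finsupp.single i 1) '' (W : Set σ) := by
  classical
  have sum_single {i : σ} (hi : i ∈ W) : ∑ j ∈ W, Finsupp.single i 1 j = 1 := by
    simp [Finsupp.single_apply, hi]
  ext a
  simp only [Set.mem_add, Set.mem_image, Set.mem_ofPred_eq, Finset.mem_coe]
  constructor
  · intro ha
    obtain ⟨i, hi, hai⟩ : ∃ i ∈ W, a i ≠ 0 := by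
      by_contra! h
      rw [Finset.sum_eq_zero h] at ha
      omega
    have hsub : a - Finsupp.single i 1 + Finsupp.single i 1 = a :=
      tsub_add_cancel_of_le (by simpa [Nat.one_le_iff_ne_zero] using hai)
    refine ⟨_, ?_, _, ⟨i, hi, rfl⟩, hsub⟩
    rw [← hsub] at ha
    simpa only [Finsupp.add_apply, Finset.sum_add_distrib, sum_single hi,
      Nat.add_le_add_iff_right] using ha
  · rintro ⟨b, hb, _, ⟨i, hi, rfl⟩, rfl⟩
    simpa only [Finsupp.add_apply, Finset.sum_add_distrib, sum_single hi,
      Nat.add_le_add_iff_right] using hb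

theorem span_X_image_pow (W : Finset σ) (k : ℕ) :
    (Ideal.span (X '' (W : Set σ)) : Ideal (MvPolynomial σ R)) ^ k =
      Ideal.span ((fun a => monomial a 1) '' {a | k ≤ ∑ i ∈ W, a i}) := by
  induction k with
  | zero =>
    rw [pow_zero, Ideal.one_eq_top, eq_comm, Ideal.eq_top_iff_one]
    exact Ideal.subset_span ⟨0, Nat.zero_le _, rfl⟩
  | succ k ih =>
    rw [pow_succ, ih, setOf_succ_le_sum_eq_add, ← span_monomial_image_mul, Set.image_image]
    rfl

theorem mem_span_X_image_pow (W : Finset σ) (k : ℕ) (f : MvPolynomial σ R) :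
    f ∈ Ideal.span (X '' (W : Set σ)) ^ k ↔ ∀ a ∈ f.support, k ≤ ∑ i ∈ W, a i := by
  rw [span_X_image_pow, mem_ideal_span_monomial_image]
  refine forall₂_congr fun a _ => ⟨?_, fun ha => ⟨a, ha, le_rfl⟩⟩
  rintro ⟨b, hb, hba⟩
  exact le_trans hb (Finset.sum_le_sum fun i _ => hba i)

theorem mem_span_X_pow_image (W : Set σ) (k : ℕ) (f : MvPolynomial σ R) :
    f ∈ Ideal.span ((fun i => X i ^ k) '' W) ↔ ∀ a ∈ f.support, ∃ i ∈ W, k ≤ a i := by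
  have generators : (fun i => X i ^ k) '' W =
      (fun a => monomial a (1 : R)) '' ((fun i => Finsupp.single i k) '' W) := by
    simp only [Set.image_image, X_pow_eq_monomial]
  rw [generators, mem_ideal_span_monomial_image]
  simp

end MonomialIdeal

section PrimaryMonomialIdeal

variable {σ R : Type*} [CommSemiring R] [NoZeroDivisors R] {W : Set σ} {U : Set (W →₀ ℕ)}

theorem exists_mem_support_mul_subtypeDomain_eq {f g : MvPolynomial σ R} {c : σ →₀ ℕ}
    (hg : g ∉ Ideal.span (X '' W)) (hc : c ∈ f.support)
    (hmin : ∀ a ∈ f.support, a.subtypeDomain (· ∈ W) ≤ c.subtypeDomain (· ∈ W) →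
      a.subtypeDomain (· ∈ W) = c.subtypeDomain (· ∈ W)) :
    ∃ a ∈ (g * f).support, a.subtypeDomain (· ∈ W) = c.subtypeDomain (· ∈ W) := by
  classical
  let restrict : (σ →₀ ℕ) → W →₀ ℕ := Finsupp.subtypeDomain (· ∈ W)
  have restrict_add (b a : σ →₀ ℕ) : restrict (b + a) = restrict b + restrict a :=
    Finsupp.subtypeDomain_add
  rw [mem_ideal_span_X_image] at hg
  push Not at hg
  obtain ⟨d, hd, hdW⟩ := hg
  -- By minimality of `c`, only these two layers of monomials contribute to products over `c`, and
  -- a sum of exponents attained uniquely gives a product term that nothing cancels.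
  obtain ⟨b₀, hb₀, a₀, ha₀, unique⟩ := UniqueSums.uniqueAdd_of_nonempty
    (A := g.support.filter (restrict · = 0)) (B := f.support.filter (restrict · = restrict c))
    ⟨d, Finset.mem_filter.2 ⟨hd, Finsupp.subtypeDomain_eq_zero_iff'.2 hdW⟩⟩
    ⟨c, Finset.mem_filter.2 ⟨hc, rfl⟩⟩
  rw [Finset.mem_filter] at hb₀ ha₀
  have restrict_sum : restrict (b₀ + a₀) = restrict c := by
    rw [restrict_add, hb₀.2, ha₀.2, zero_add]
  have coeff_sum : coeff (b₀ + a₀) (g * f) = coeff b₀ g * coeff a₀ f := by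
    rw [coeff_mul]
    refine Finset.sum_eq_single (b₀, a₀) ?_ (by simp)
    rintro ⟨b, a⟩ hba hne
    rw [Finset.HasAntidiagonal.mem_antidiagonal] at hba
    by_contra hcoeff
    have hb : b ∈ g.support := mem_support_iff.2 (left_ne_zero_of_mul hcoeff)
    have ha : a ∈ f.support := mem_support_iff.2 (right_ne_zero_of_mul hcoeff)
    have hsum : restrict b + restrict a = restrict c := by rw [← restrict_add, hba, restrict_sum]
    have hac : restrict a = restrict c := hmin a ha (le_add_self.trans_eq hsum)
    have hb0 : restrict b = 0 := by simpa [hac] using hsum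
    obtain ⟨rfl, rfl⟩ := unique (Finset.mem_filter.2 ⟨hb, hb0⟩) (Finset.mem_filter.2 ⟨ha, hac⟩) hba
    exact hne rfl
  refine ⟨b₀ + a₀, ?_, restrict_sum⟩
  rw [mem_support_iff, coeff_sum]
  exact mul_ne_zero (mem_support_iff.1 hb₀.1) (mem_support_iff.1 ha₀.1)

theorem subtypeDomain_mem_of_mul {f g : MvPolynomial σ R} (hU : IsUpperSet U)
    (hg : g ∉ Ideal.span (X '' W)) (hgf : ∀ a ∈ (g * f).support, a.subtypeDomain (· ∈ W) ∈ U) :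
    ∀ a ∈ f.support, a.subtypeDomain (· ∈ W) ∈ U := by
  classical
  by_contra! hf
  obtain ⟨c, hc, hmin⟩ := (f.support.filter (Finsupp.subtypeDomain (· ∈ W) · ∉ U)).exists_minimalFor
    (Finsupp.subtypeDomain (· ∈ W)) (by simpa only [Finset.filter_nonempty_iff] using hf)
  simp only [Finset.mem_filter] at hc hmin
  obtain ⟨a, ha, hac⟩ := exists_mem_support_mul_subtypeDomain_eq hg hc.1 fun b hb hbc =>
    hbc.antisymm (hmin ⟨hb, fun hbU => hc.2 (hU hbc hbU)⟩ hbc)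
  exact hc.2 (hac ▸ hgf a ha)

theorem isPrime_span_X_image [Nontrivial R] (W : Set σ) :
    (Ideal.span (X '' W) : Ideal (MvPolynomial σ R)).IsPrime := by
  have mem_iff (f : MvPolynomial σ R) : f ∈ Ideal.span (X '' W) ↔
      ∀ a ∈ f.support, a.subtypeDomain (· ∈ W) ∈ {b : W →₀ ℕ | ∃ i, b i ≠ 0} := by
    simp [mem_ideal_span_X_image]
  refine ⟨?_, fun {g f} hgf => or_iff_not_imp_left.2 fun hg => ?_⟩
  · rw [Ideal.ne_top_iff_one, mem_ideal_span_X_image]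
    simp
  · rw [mem_iff] at hgf ⊢
    refine subtypeDomain_mem_of_mul (fun b c hbc => ?_) hg hgf
    rintro ⟨i, hi⟩
    exact ⟨i, (hi.bot_lt.trans_le (hbc i)).ne'⟩

variable [Nontrivial R] {I : Ideal (MvPolynomial σ R)}

theorem radical_eq_span_X_image
    (hI : ∀ f, f ∈ I ↔ ∀ a ∈ f.support, a.subtypeDomain (· ∈ W) ∈ U) (zero_notMem : 0 ∉ U)
    (single_mem : ∀ i, ∃ k, Finsupp.single i k ∈ U) :
    I.radical = Ideal.span (X '' W) := by
  classical
  apply le_antisymm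
  · refine (Ideal.IsPrime.radical_le_iff (isPrime_span_X_image W)).2 fun f hf => ?_
    rw [mem_ideal_span_X_image]
    intro a ha
    by_contra! h
    exact zero_notMem (Finsupp.subtypeDomain_eq_zero_iff'.2 h ▸ (hI f).1 hf a ha)
  · rw [Ideal.span_le]
    rintro _ ⟨i, hi, rfl⟩
    obtain ⟨k, hk⟩ := single_mem ⟨i, hi⟩
    refine ⟨k, (hI _).2 ?_⟩
    rw [support_X_pow]
    simp only [Finset.mem_singleton, forall_eq]
    convert hk
    ext j
    simp [Finsupp.single_apply, Subtype.ext_iff]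

theorem isPrimary_of_mem_iff (hU : IsUpperSet U)
    (hI : ∀ f, f ∈ I ↔ ∀ a ∈ f.support, a.subtypeDomain (· ∈ W) ∈ U) (zero_notMem : 0 ∉ U)
    (single_mem : ∀ i, ∃ k, Finsupp.single i k ∈ U) : I.IsPrimary := by
  rw [Ideal.isPrimary_iff, radical_eq_span_X_image hI zero_notMem single_mem]
  refine ⟨?_, fun {f g} hfg => or_iff_not_imp_right.2 fun hg => ?_⟩
  · rw [Ideal.ne_top_iff_one, hI]
    simpa using zero_notMem
  · rw [mul_comm, hI] at hfg
    exact (hI f).2 (subtypeDomain_mem_of_mul hU hg hfg)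

variable (R) in
theorem isPrimary_span_X_image_pow (W : Finset σ) {k : ℕ} (hk : k ≠ 0) :
    (Ideal.span (X '' (W : Set σ)) ^ k : Ideal (MvPolynomial σ R)).IsPrimary := by
  classical
  refine isPrimary_of_mem_iff (W := (W : Set σ)) (U := {b | k ≤ ∑ i, b i})
    (fun b c hbc hb => le_trans hb (Finset.sum_le_sum fun i _ => hbc i)) (fun f => ?_) ?_
    fun i => ?_
  · rw [mem_span_X_image_pow]
    simp only [Set.mem_ofPred_eq, Finsupp.subtypeDomain_apply]
    refine forall₂_congr fun a _ => ?_
    rw [← Finset.sum_coe_sort W]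
    rfl
  · simpa using hk
  · exact ⟨k, by simp [Finsupp.single_apply]⟩

variable (R) in
theorem isPrimary_span_X_pow_image (W : Set σ) {k : ℕ} (hk : k ≠ 0) :
    (Ideal.span ((fun i => X i ^ k) '' W) : Ideal (MvPolynomial σ R)).IsPrimary :=
  isPrimary_of_mem_iff (W := W) (U := {b | ∃ i, k ≤ b i})
    (fun b c hbc => fun ⟨i, hi⟩ => ⟨i, hi.trans (hbc i)⟩)
    (fun f => by simp [mem_span_X_pow_image]) (by simpa using fun _ _ => hk)
    fun i => ⟨k, i, by simp⟩

variable (R) in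
theorem radical_span_X_pow_image (W : Set σ) {k : ℕ} (hk : k ≠ 0) :
    (Ideal.span ((fun i => X i ^ k) '' W) : Ideal (MvPolynomial σ R)).radical =
      Ideal.span (X '' W) :=
  radical_eq_span_X_image (W := W) (U := {b | ∃ i, k ≤ b i})
    (fun f => by simp [mem_span_X_pow_image]) (by simpa using fun _ _ => hk)
    fun i => ⟨k, i, by simp⟩

end PrimaryMonomialIdeal

section OddCycle

open SimpleGraph

theorem cycleGraph_adj_iff_of_lt {n : ℕ} {i j : Fin n} (hij : i < j) :
    (cycleGraph n).Adj i j ↔ (j : ℕ) = i + 1 ∨ (j : ℕ) + 1 = i + n := by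
  rw [cycleGraph_adj', Fin.sub_val_of_le hij.le, Fin.coe_sub_iff_lt.2 hij]
  omega

theorem not_colorable_two_cycleGraph {n : ℕ} (hn : 2 ≤ n) (odd : Odd n) :
    ¬ (cycleGraph n).Colorable 2 := by
  intro h
  have := h.chromaticNumber_le
  rw [chromaticNumber_cycleGraph_of_odd n hn odd] at this
  exact absurd this (by decide)

theorem colorable_two_induce_cycleGraph_compl_singleton {n : ℕ} (j : Fin n) :
    ((cycleGraph n).induce {j}ᶜ).Colorable 2 := by
  have : NeZero n := ⟨j.pos.ne'⟩
  have parity {u v : Fin n} (hu : u ≠ j) (huv : (u - v).val = 1) :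
      ¬ (Even (u - j).val ↔ Even (v - j).val) := by
    have hval := Fin.val_add_eq_ite (u - v) (v - j)
    rw [sub_add_sub_cancel, huv] at hval
    split_ifs at hval with wrap
    · refine absurd (sub_eq_zero.1 (Fin.ext ?_)) hu
      rw [Fin.val_zero]
      omega
    · rw [hval, add_comm, Nat.even_add_one]
      tauto
  let C : ((cycleGraph n).induce {j}ᶜ).Coloring Bool :=
    .mk (fun u => decide (Even (u.1 - j).val)) fun {u v} h => by
      rcases cycleGraph_adj'.1 h with h | h
      · simpa using parity u.2 h
      · simpa [iff_comm] using parity v.2 h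
  exact C.colorable

variable {V : Type*} {H : SimpleGraph V} {u : V}

theorem exists_walks_between_getVert (w : H.Walk u u) {i j : ℕ} (hij : i ≤ j)
    (hj : j ≤ w.length) :
    ∃ (p : H.Walk (w.getVert i) (w.getVert j)) (q : H.Walk (w.getVert j) (w.getVert i)),
      p.length = j - i ∧ q.length = w.length - (j - i) := by
  refine ⟨((w.drop i).take (j - i)).copy rfl ?_, (w.drop j).append (w.take i), ?_, ?_⟩
  · rw [Walk.drop_getVert, Nat.add_sub_cancel' hij]
  · rw [Walk.length_copy, Walk.take_length, Walk.drop_length]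
    omega
  · rw [Walk.length_append, Walk.take_length, Walk.drop_length]
    omega

/-- A closed walk of odd length that is shortest among all odd closed walks of the graph, whatever
their base points. -/
structure IsShortestOddLoop (w : H.Walk u u) : Prop where
  odd : Odd w.length
  length_le : ∀ {v : V} (p : H.Walk v v), Odd p.length → w.length ≤ p.length

theorem exists_isShortestOddLoop (hH : ¬ H.Colorable 2) :
    ∃ (u : V) (w : H.Walk u u), IsShortestOddLoop w := by
  classical
  have exists_odd : ∃ k, Odd k ∧ ∃ (u : V) (w : H.Walk u u), w.length = k := by
    simpa [two_colorable_iff_forall_loop_even] using hH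
  obtain ⟨odd, u, w, hw⟩ := Nat.find_spec exists_odd
  exact ⟨u, w, hw ▸ odd, fun p hp => hw ▸ Nat.find_min' exists_odd ⟨hp, _, p, rfl⟩⟩

namespace IsShortestOddLoop

variable {w : H.Walk u u}

theorem three_le_length (hw : IsShortestOddLoop w) : 3 ≤ w.length := by
  obtain ⟨m, hm⟩ := hw.odd
  have : w.length ≠ 1 := fun h => (Walk.adj_of_length_eq_one h).ne rfl
  omega

theorem getVert_ne (hw : IsShortestOddLoop w) {i j : ℕ} (hij : i < j) (hj : j < w.length) :
    w.getVert i ≠ w.getVert j := by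
  intro heq
  obtain ⟨p, q, hp, hq⟩ := exists_walks_between_getVert w hij.le hj.le
  rcases Nat.even_or_odd (j - i) with even | odd
  · have := hw.length_le (q.copy heq.symm rfl)
      (by rw [Walk.length_copy, hq]; exact Nat.Odd.sub_even (by omega) hw.odd even)
    rw [Walk.length_copy] at this
    omega
  · have := hw.length_le (p.copy rfl heq.symm) (by rwa [Walk.length_copy, hp])
    rw [Walk.length_copy] at this
    omega

theorem adj_getVert_iff (hw : IsShortestOddLoop w) {i j : ℕ} (hij : i < j) (hj : j < w.length) :
    H.Adj (w.getVert i) (w.getVert j) ↔ j = i + 1 ∨ j + 1 = i + w.length := by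
  constructor
  · intro adj
    obtain ⟨p, q, hp, hq⟩ := exists_walks_between_getVert w hij.le hj.le
    rcases Nat.even_or_odd (j - i) with even | odd
    · have := hw.length_le (p.concat adj.symm) (by rw [Walk.length_concat, hp]; exact even.add_one)
      rw [Walk.length_concat] at this
      omega
    · have := hw.length_le (q.concat adj)
        (by rw [Walk.length_concat, hq]; exact (Nat.Odd.sub_odd hw.odd odd).add_one)
      rw [Walk.length_concat] at this
      omega
  · rintro (rfl | hj')
    · exact w.adj_getVert_succ (by omega)
    · obtain rfl : i = 0 := by omega
      have adj := w.adj_getVert_succ hj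
      rw [hj', zero_add, Walk.getVert_length] at adj
      rw [Walk.getVert_zero]
      exact adj.symm

theorem nonempty_cycleGraph_embedding (hw : IsShortestOddLoop w) :
    Nonempty (cycleGraph w.length ↪g H) := by
  have injective : Function.Injective fun i : Fin w.length => w.getVert i :=
    .of_lt_imp_ne fun _ j hij => hw.getVert_ne hij j.2
  refine ⟨⟨⟨_, injective⟩, fun {i j} => ?_⟩⟩
  change H.Adj (w.getVert i) (w.getVert j) ↔ _
  rcases lt_trichotomy i j with hij | rfl | hij
  · rw [hw.adj_getVert_iff hij j.2, cycleGraph_adj_iff_of_lt hij]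
  · simp only [SimpleGraph.irrefl]
  · rw [H.adj_comm, (cycleGraph _).adj_comm, hw.adj_getVert_iff hij i.2,
      cycleGraph_adj_iff_of_lt hij]

end IsShortestOddLoop

theorem exists_odd_cycleGraph_embedding (hH : ¬ H.Colorable 2) :
    ∃ k, 3 ≤ k ∧ Odd k ∧ Nonempty (cycleGraph k ↪g H) := by
  obtain ⟨u, w, hw⟩ := exists_isShortestOddLoop hH
  exact ⟨w.length, hw.three_le_length, hw.odd, hw.nonempty_cycleGraph_embedding⟩

end OddCycle

section InducedOddCycle

open SimpleGraph

variable {n : ℕ} {G : GraphOn n} {W : Finset (Fin n)} {s : Set (Fin n)}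

/-- The simple graph with the same edges as `G`, through which the colouring and embedding API of
`SimpleGraph` applies. -/
def GraphOn.toSimpleGraph (G : GraphOn n) : SimpleGraph (Fin n) where
  Adj u v := {u, v} ∈ G.edges
  symm := ⟨fun u v huv => Finset.pair_comm u v ▸ huv⟩
  loopless := ⟨fun u huu => by simpa using G.card_eq _ huu⟩

theorem exists_zmod_cycle_iff_exists_cycleGraph_embedding {k : ℕ} (hk : 2 ≤ k) :
    (∃ f : ZMod k → Fin n, Function.Injective f ∧ (∀ i, f i ∈ W) ∧ (∀ w ∈ W, ∃ i, f i = w) ∧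
      (∀ i, {f i, f (i + 1)} ∈ G.edges) ∧ ∀ e ∈ G.edges, e ⊆ W → ∃ i, e = {f i, f (i + 1)}) ↔
    ∃ φ : cycleGraph k ↪g G.toSimpleGraph, Finset.univ.map φ.toEmbedding = W := by
  obtain ⟨m, rfl⟩ := Nat.exists_eq_add_of_le' hk
  have adj_iff (u v : Fin (m + 2)) : (cycleGraph (m + 2)).Adj u v ↔ u = v + 1 ∨ v = u + 1 := by
    rw [cycleGraph_adj, sub_eq_iff_eq_add', sub_eq_iff_eq_add', add_comm v, add_comm u]
  -- `ZMod (m + 2)` unfolds to `Fin (m + 2)`, the vertex type of `cycleGraph (m + 2)`.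
  constructor
  · rintro ⟨f : Fin (m + 2) → Fin n, inj, mem, surj, succ_mem, exists_eq⟩
    refine ⟨⟨⟨f, inj⟩, fun {u v} => ?_⟩, ?_⟩
    · change {f u, f v} ∈ G.edges ↔ _
      rw [adj_iff]
      constructor
      · intro huv
        obtain ⟨i, hi⟩ := exists_eq _ huv
          (Finset.insert_subset (mem u) (Finset.singleton_subset_iff.2 (mem v)))
        rw [← Finset.coe_inj, Finset.coe_pair, Finset.coe_pair, Set.pair_eq_pair_iff] at hi
        rcases hi with ⟨hu, hv⟩ | ⟨hu, hv⟩
        · obtain rfl := inj hu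
          exact .inr (inj hv)
        · obtain rfl := inj hv
          exact .inl (inj hu)
      · rintro (rfl | rfl)
        · rw [Finset.pair_comm]
          exact succ_mem v
        · exact succ_mem u
    · ext w
      simpa using ⟨fun ⟨i, hi⟩ => hi ▸ mem i, surj w⟩
  · rintro ⟨φ, rfl⟩
    refine ⟨φ, φ.injective, fun i => Finset.mem_map_of_mem φ.toEmbedding (Finset.mem_univ i),
      fun w hw => (Finset.mem_map.1 hw).imp fun _ => And.right, ?_, ?_⟩
    · intro i
      exact φ.map_rel_iff.2 ((adj_iff _ _).2 (.inr rfl))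
    · intro e he heW
      obtain ⟨u, v, -, rfl⟩ := Finset.card_eq_two.1 (G.card_eq e he)
      simp only [Finset.insert_subset_iff, Finset.singleton_subset_iff, Finset.mem_map,
        Finset.mem_univ, true_and] at heW
      obtain ⟨⟨i, rfl⟩, j, rfl⟩ := heW
      rcases (adj_iff i j).1 (φ.map_rel_iff.1 he) with rfl | rfl
      · exact ⟨j, Finset.pair_comm _ _⟩
      · exact ⟨i, rfl⟩

theorem isInducedOddCycle_iff_exists_embedding :
    IsInducedOddCycle G W ↔ ∃ k, 3 ≤ k ∧ Odd k ∧
      ∃ φ : cycleGraph k ↪g G.toSimpleGraph, Finset.univ.map φ.toEmbedding = W := by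
  constructor
  · rintro ⟨three_le, odd, param⟩
    exact ⟨_, three_le, odd,
      (exists_zmod_cycle_iff_exists_cycleGraph_embedding (by omega)).1 param⟩
  · rintro ⟨k, three_le, odd, φ, hφ⟩
    obtain rfl : W.card = k := by rw [← hφ, Finset.card_map, Finset.card_univ, Fintype.card_fin]
    exact ⟨three_le, odd,
      (exists_zmod_cycle_iff_exists_cycleGraph_embedding (by omega)).2 ⟨φ, hφ⟩⟩

theorem IsInducedOddCycle.not_colorable_two_induce (hW : IsInducedOddCycle G W) (hWs : ↑W ⊆ s) :
    ¬ (G.toSimpleGraph.induce s).Colorable 2 := by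
  obtain ⟨k, three_le, odd, φ, rfl⟩ := isInducedOddCycle_iff_exists_embedding.1 hW
  have mem (i : Fin k) : φ i ∈ s := hWs (by simp)
  let ψ : cycleGraph k →g G.toSimpleGraph.induce s :=
    ⟨fun i => ⟨φ i, mem i⟩, fun hij => φ.map_rel_iff.2 hij⟩
  exact fun h => not_colorable_two_cycleGraph (by omega) odd (h.of_hom ψ)

theorem colorable_two_induce_iff :
    (G.toSimpleGraph.induce s).Colorable 2 ↔ ∀ W, IsInducedOddCycle G W → ¬ ↑W ⊆ s := by
  refine ⟨fun h W hW hWs => hW.not_colorable_two_induce hWs h, fun h => ?_⟩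
  by_contra hcol
  obtain ⟨k, three_le, odd, ⟨φ⟩⟩ := exists_odd_cycleGraph_embedding hcol
  refine h _ (isInducedOddCycle_iff_exists_embedding.2
    ⟨k, three_le, odd, (Embedding.induce s).comp φ, rfl⟩) ?_
  intro w hw
  obtain ⟨i, rfl⟩ : ∃ i, (φ i : Fin n) = w := by simpa using hw
  exact (φ i).2

theorem IsInducedOddCycle.eq_of_subset {W' : Finset (Fin n)} (hW' : IsInducedOddCycle G W')
    (hW : IsInducedOddCycle G W) (hsub : W' ⊆ W) : W' = W := by
  obtain ⟨k, -, -, φ, rfl⟩ := isInducedOddCycle_iff_exists_embedding.1 hW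
  refine hsub.antisymm fun w hw => ?_
  obtain ⟨j, rfl⟩ : ∃ j, φ j = w := by simpa using hw
  by_contra hj
  let ψ := φ.comp (Embedding.induce {j}ᶜ)
  have hWψ : ↑W' ⊆ Set.range ψ := by
    intro w hw'
    obtain ⟨i, rfl⟩ : ∃ i, φ i = w := by simpa using hsub hw'
    exact ⟨⟨i, fun hij => hj (hij ▸ hw')⟩, rfl⟩
  exact hW'.not_colorable_two_induce hWψ
    ((colorable_two_induce_cycleGraph_compl_singleton j).of_hom ψ.isoInduceRange.symm.toHom)

end InducedOddCycle

section CoverIdeal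

variable {n : ℕ} {G : GraphOn n} {e : Finset (Fin n)} {a : Fin n → ℕ}

/-- The vector `a` dominates the sum of the indicator vectors of two vertex covers of `G`. These are
the exponents of the monomials lying in the square of the cover ideal. -/
def DominatesTwoCovers (G : GraphOn n) (a : Fin n → ℕ) : Prop :=
  ∃ w₁ w₂, IsCover G w₁ ∧ IsCover G w₂ ∧
    ∀ i, (if i ∈ w₁ then 1 else 0) + (if i ∈ w₂ then 1 else 0) ≤ a i

theorem coverIdeal_eq_span_monomial (K : Type*) [Field K] (G : GraphOn n) :
    coverIdeal K G = Ideal.span ((fun a => monomial a 1) ''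
      ((fun w => Finsupp.indicator w fun _ _ => 1) '' {w | IsCover G w})) := by
  have monomial_indicator (w : Finset (Fin n)) :
      monomial (Finsupp.indicator w fun _ _ => 1) (1 : K) = ∏ i ∈ w, X i := by
    rw [Finsupp.indicator_eq_sum_single, monomial_sum_one]
    rfl
  rw [coverIdeal, Set.image_image]
  simp only [monomial_indicator]
  congr 1
  ext m
  simp [eq_comm]

theorem mem_coverIdeal_sq {K : Type*} [Field K] (f : MvPolynomial (Fin n) K) :
    f ∈ coverIdeal K G ^ 2 ↔ ∀ a ∈ f.support, DominatesTwoCovers G a := by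
  rw [pow_two, coverIdeal_eq_span_monomial, span_monomial_image_mul, mem_ideal_span_monomial_image]
  refine forall₂_congr fun a _ => ?_
  have indicator_add_le {w₁ w₂ : Finset (Fin n)} :
      (∀ i, (if i ∈ w₁ then 1 else 0) + (if i ∈ w₂ then 1 else 0) ≤ a i) ↔
        (Finsupp.indicator w₁ fun _ _ => 1) + (Finsupp.indicator w₂ fun _ _ => 1) ≤ a := by
    simp [Finsupp.le_def, Finsupp.indicator_apply]
  simp only [DominatesTwoCovers, indicator_add_le, Set.mem_add, Set.exists_mem_image,
    Set.mem_ofPred_eq]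
  constructor
  · rintro ⟨_, ⟨w₁, hw₁, w₂, hw₂, rfl⟩, hle⟩
    exact ⟨w₁, w₂, hw₁, hw₂, hle⟩
  · rintro ⟨w₁, w₂, hw₁, hw₂, hle⟩
    exact ⟨_, ⟨w₁, hw₁, w₂, hw₂, rfl⟩, hle⟩

theorem IsCover.mem_or_mem {w : Finset (Fin n)} (hw : IsCover G w) {i j : Fin n}
    (hij : {i, j} ∈ G.edges) : i ∈ w ∨ j ∈ w := by
  obtain ⟨k, hk⟩ := hw _ hij
  rw [Finset.mem_inter, Finset.mem_insert, Finset.mem_singleton] at hk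
  obtain ⟨hk, rfl | rfl⟩ := hk
  · exact .inl hk
  · exact .inr hk

theorem DominatesTwoCovers.two_le_sum (ha : DominatesTwoCovers G a) (he : e ∈ G.edges) :
    2 ≤ ∑ i ∈ e, a i := by
  obtain ⟨w₁, w₂, hw₁, hw₂, hle⟩ := ha
  calc
    2 ≤ (w₁ ∩ e).card + (w₂ ∩ e).card :=
      Nat.add_le_add (hw₁ e he).card_pos (hw₂ e he).card_pos
    _ = ∑ i ∈ e, ((if i ∈ w₁ then 1 else 0) + if i ∈ w₂ then 1 else 0) := by
      simp [Finset.sum_add_distrib, Finset.inter_comm]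
    _ ≤ ∑ i ∈ e, a i := Finset.sum_le_sum fun i _ => hle i

theorem DominatesTwoCovers.colorable_two (ha : DominatesTwoCovers G a) :
    (G.toSimpleGraph.induce {i | a i ≤ 1}).Colorable 2 := by
  obtain ⟨w₁, w₂, hw₁, hw₂, hle⟩ := ha
  have not_both {i : Fin n} (hi : a i ≤ 1) (h₁ : i ∈ w₁) : i ∉ w₂ := fun h₂ => by
    have := hle i
    rw [if_pos h₁, if_pos h₂] at this
    omega
  let C : (G.toSimpleGraph.induce {i | a i ≤ 1}).Coloring Bool :=
    .mk (fun i => decide (i.1 ∈ w₁)) fun {i j} hij => by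
      have h₁ := hw₁.mem_or_mem hij
      have h₂ := hw₂.mem_or_mem hij
      have hi := not_both i.2
      have hj := not_both j.2
      rw [Ne, decide_eq_decide]
      tauto
  exact C.colorable

theorem dominatesTwoCovers_of_colorable_two (two_le : ∀ e ∈ G.edges, 2 ≤ ∑ i ∈ e, a i)
    (hC : (G.toSimpleGraph.induce {i | a i ≤ 1}).Colorable 2) : DominatesTwoCovers G a := by
  obtain ⟨C⟩ := hC
  let w (t : Fin 2) : Finset (Fin n) := {i | 0 < a i ∧ ∀ h : a i ≤ 1, C ⟨i, h⟩ = t}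
  have mem_w {t : Fin 2} {i : Fin n} : i ∈ w t ↔ 0 < a i ∧ ∀ h : a i ≤ 1, C ⟨i, h⟩ = t := by
    simp [w]
  have cover (t : Fin 2) : IsCover G (w t) := by
    intro e he
    obtain ⟨i, j, hij, rfl⟩ := Finset.card_eq_two.1 (G.card_eq e he)
    have hsum := two_le _ he
    rw [Finset.sum_pair hij] at hsum
    suffices i ∈ w t ∨ j ∈ w t by
      rcases this with h | h
      · exact ⟨i, Finset.mem_inter.2 ⟨h, by simp⟩⟩
      · exact ⟨j, Finset.mem_inter.2 ⟨h, by simp⟩⟩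
    rcases lt_or_ge 1 (a i) with hi | hi
    · exact .inl (mem_w.2 ⟨by omega, fun h => by omega⟩)
    rcases lt_or_ge 1 (a j) with hj | hj
    · exact .inr (mem_w.2 ⟨by omega, fun h => by omega⟩)
    have hne : C ⟨i, hi⟩ ≠ C ⟨j, hj⟩ := C.valid he
    by_cases ht : C ⟨i, hi⟩ = t
    · exact .inl (mem_w.2 ⟨by omega, fun _ => ht⟩)
    · exact .inr (mem_w.2 ⟨by omega, fun _ => by omega⟩)
  refine ⟨w 0, w 1, cover 0, cover 1, fun i => ?_⟩
  have disjoint (hi : a i ≤ 1) (h₀ : i ∈ w 0) : i ∉ w 1 := fun h₁ =>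
    zero_ne_one ((mem_w.1 h₀).2 hi ▸ (mem_w.1 h₁).2 hi)
  have pos {t : Fin 2} (h : i ∈ w t) : 0 < a i := (mem_w.1 h).1
  split_ifs with h₀ h₁ h₁
  · by_contra! hi
    exact disjoint (by omega) h₀ h₁
  · exact pos h₀
  · exact pos h₁
  · exact Nat.zero_le _

theorem dominatesTwoCovers_iff :
    DominatesTwoCovers G a ↔ (∀ e ∈ G.edges, 2 ≤ ∑ i ∈ e, a i) ∧
      ∀ W, IsInducedOddCycle G W → ∃ i ∈ W, 2 ≤ a i := by
  have not_subset_iff (W : Finset (Fin n)) : ¬ ↑W ⊆ {i | a i ≤ 1} ↔ ∃ i ∈ W, 2 ≤ a i := by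
    simp [Set.not_subset, Nat.lt_iff_add_one_le]
  simp only [← not_subset_iff, ← colorable_two_induce_iff]
  exact ⟨fun ha => ⟨fun _ => ha.two_le_sum, ha.colorable_two⟩,
    fun h => dominatesTwoCovers_of_colorable_two h.1 h.2⟩

end CoverIdeal

section PrimaryDecomposition

variable {n : ℕ} (K : Type*) [Field K] (G : GraphOn n)

theorem varPrime_eq_span_X_image (W : Finset (Fin n)) :
    varPrime K W = Ideal.span (X '' (W : Set (Fin n))) := by
  simp only [varPrime, Set.image, Finset.mem_coe, eq_comm]

theorem varPrime_injective : Function.Injective (varPrime K : Finset (Fin n) → _) := by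
  have X_mem_iff (W : Finset (Fin n)) (i : Fin n) : X i ∈ varPrime K W ↔ i ∈ W := by
    classical
    rw [varPrime_eq_span_X_image, mem_ideal_span_X_image, support_X]
    simp [Finsupp.single_apply]
  intro W W' h
  ext i
  rw [← X_mem_iff, h, X_mem_iff]

/-- The primary components of the square of the cover ideal, indexed by the edges and the induced
odd cycles of `G`: the square of the prime of an edge, and the ideal generated by the squares of the
variables on an odd cycle. -/
noncomputable def primaryComponent :
    G.edges ⊕ {W // IsInducedOddCycle G W} → Ideal (MvPolynomial (Fin n) K) :=
  Sum.elim (fun e => varPrime K e ^ 2)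
    (fun W => Ideal.span ((fun i => X i ^ 2) '' (W : Set (Fin n))))

variable {K G}

theorem mem_primaryComponent_inl {e : G.edges} {f : MvPolynomial (Fin n) K} :
    f ∈ primaryComponent K G (.inl e) ↔ ∀ a ∈ f.support, 2 ≤ ∑ i ∈ e, a i := by
  rw [primaryComponent, Sum.elim_inl, varPrime_eq_span_X_image, mem_span_X_image_pow]

theorem mem_primaryComponent_inr {W : {W // IsInducedOddCycle G W}} {f : MvPolynomial (Fin n) K} :
    f ∈ primaryComponent K G (.inr W) ↔ ∀ a ∈ f.support, ∃ i ∈ W.1, 2 ≤ a i :=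
  mem_span_X_pow_image _ _ _

variable (K G)

theorem coverIdeal_sq_eq_iInf : coverIdeal K G ^ 2 = ⨅ c, primaryComponent K G c := by
  ext f
  simp only [mem_coverIdeal_sq, dominatesTwoCovers_iff, Submodule.mem_iInf, Sum.forall,
    mem_primaryComponent_inl, mem_primaryComponent_inr, Subtype.forall]
  exact ⟨fun h => ⟨fun e he a ha => (h a ha).1 e he, fun W hW a ha => (h a ha).2 W hW⟩,
    fun h a ha => ⟨fun e he => h.1 e he a ha, fun W hW => h.2 W hW a ha⟩⟩

theorem isPrimary_primaryComponent (c : G.edges ⊕ {W // IsInducedOddCycle G W}) :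
    (primaryComponent K G c).IsPrimary := by
  rcases c with e | W
  · rw [primaryComponent, Sum.elim_inl, varPrime_eq_span_X_image]
    exact isPrimary_span_X_image_pow K e.1 two_ne_zero
  · exact isPrimary_span_X_pow_image K _ two_ne_zero

theorem radical_primaryComponent (c : G.edges ⊕ {W // IsInducedOddCycle G W}) :
    (primaryComponent K G c).radical = varPrime K (c.elim (↑) (↑)) := by
  rcases c with e | W
  · simp only [primaryComponent, Sum.elim_inl, varPrime_eq_span_X_image]
    rw [Ideal.radical_pow _ two_ne_zero, (isPrime_span_X_image _).radical]
  · simp only [primaryComponent, Sum.elim_inr, varPrime_eq_span_X_image,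
      radical_span_X_pow_image K _ two_ne_zero]

theorem radical_primaryComponent_injective :
    Function.Injective fun c => (primaryComponent K G c).radical := by
  simp only [radical_primaryComponent]
  refine (varPrime_injective K).comp
    (Subtype.val_injective.sumElim Subtype.val_injective fun e W heq => ?_)
  have := W.2.1
  rw [← heq, G.card_eq e e.2] at this
  omega

variable {K G}

theorem monomial_mem_primaryComponent_of_two_le {c : G.edges ⊕ {W // IsInducedOddCycle G W}}
    {a : Fin n →₀ ℕ} {i : Fin n} (hi : i ∈ (c.elim (↑) (↑) : Finset (Fin n))) (hai : 2 ≤ a i) :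
    monomial a 1 ∈ primaryComponent K G c := by
  classical
  rcases c with e | W
  · rw [mem_primaryComponent_inl]
    simpa [support_monomial] using hai.trans (Finset.single_le_sum (fun _ _ => Nat.zero_le _) hi)
  · rw [mem_primaryComponent_inr]
    simpa [support_monomial] using ⟨i, hi, hai⟩

variable (K)

theorem exists_notMem_primaryComponent_inl (e : G.edges) :
    ∃ f ∉ primaryComponent K G (.inl e), ∀ c ≠ .inl e, f ∈ primaryComponent K G c := by
  classical
  let a : Fin n →₀ ℕ := Finsupp.equivFunOnFinite.symm fun i => if i ∈ e.1 then 0 else 2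
  have zero_on {i : Fin n} (hi : i ∈ e.1) : a i = 0 := if_pos hi
  have two_off {i : Fin n} (hi : i ∉ e.1) : 2 ≤ a i := (if_neg hi).ge
  refine ⟨monomial a 1, ?_, fun c hc => ?_⟩
  · simp [mem_primaryComponent_inl, support_monomial, Finset.sum_eq_zero fun _ => zero_on]
  · obtain ⟨i, hic, hie⟩ : ∃ i ∈ (c.elim (↑) (↑) : Finset (Fin n)), i ∉ e.1 := by
      have he := G.card_eq e e.2
      rcases c with e' | W
      · by_contra! hsub
        have heq := Finset.eq_of_subset_of_card_le hsub (he.trans (G.card_eq e' e'.2).symm).le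
        exact hc (congrArg Sum.inl (Subtype.ext heq))
      · exact Finset.exists_mem_notMem_of_card_lt_card (he.trans_lt W.2.1)
    exact monomial_mem_primaryComponent_of_two_le hic (two_off hie)

theorem exists_notMem_primaryComponent_inr (W : {W // IsInducedOddCycle G W}) :
    ∃ f ∉ primaryComponent K G (.inr W), ∀ c ≠ .inr W, f ∈ primaryComponent K G c := by
  classical
  let a : Fin n →₀ ℕ := Finsupp.equivFunOnFinite.symm fun i => if i ∈ W.1 then 1 else 2
  have one_on {i : Fin n} (hi : i ∈ W.1) : a i = 1 := if_pos hi
  have two_off {i : Fin n} (hi : i ∉ W.1) : 2 ≤ a i := (if_neg hi).ge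
  have one_le (i : Fin n) : 1 ≤ a i := by
    by_cases hi : i ∈ W.1
    · exact (one_on hi).ge
    · exact one_le_two.trans (two_off hi)
  refine ⟨monomial a 1, ?_, ?_⟩
  · simpa [mem_primaryComponent_inr, support_monomial] using
      fun i hi => (one_on hi).trans_lt one_lt_two
  · rintro (e | W') hc
    · have := Finset.card_nsmul_le_sum e.1 a 1 fun i _ => one_le i
      simpa [mem_primaryComponent_inl, support_monomial, G.card_eq e e.2] using this
    · obtain ⟨i, hiW', hiW⟩ := Finset.not_subset.1 fun hsub =>
        hc (congrArg Sum.inr (Subtype.ext (W'.2.eq_of_subset W.2 hsub)))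
      exact monomial_mem_primaryComponent_of_two_le hiW' (two_off hiW)

theorem exists_notMem_primaryComponent (c : G.edges ⊕ {W // IsInducedOddCycle G W}) :
    ∃ f ∉ primaryComponent K G c, ∀ d ≠ c, f ∈ primaryComponent K G d := by
  rcases c with e | W
  · exact exists_notMem_primaryComponent_inl K e
  · exact exists_notMem_primaryComponent_inr K W

end PrimaryDecomposition

/-- Let `G` be a finite simple graph with cover ideal `J = J(G)`.
Then `Ass(S/J²) = {p_e : e ∈ E(G)} ∪ {p_W : G_W is an induced odd cycle}`. -/
theorem associatedPrimes_coverIdeal_sq {n : ℕ} (K : Type*) [Field K] (G : GraphOn n) :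
    associatedPrimes (MvPolynomial (Fin n) K)
        (MvPolynomial (Fin n) K ⧸ (coverIdeal K G ^ 2)) =
      {P | ∃ e ∈ G.edges, P = varPrime K e} ∪
      {P | ∃ W : Finset (Fin n), IsInducedOddCycle G W ∧ P = varPrime K W} := by
  rw [coverIdeal_sq_eq_iInf, associatedPrimes_quotient_iInf (isPrimary_primaryComponent K G)
    (radical_primaryComponent_injective K G) (exists_notMem_primaryComponent K)]
  ext P
  simp [radical_primaryComponent, eq_comm]
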